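/- arXiv:2209.07235 — 9 statements merged into one kernel-verified Lean document; each statement's English description precedes it below -/
import Mathlib

section
/- Let u ∈ ℝ^{d₁}, v ∈ ℝ^{d₂}, and let lu, uu ∈ ℝ^{d₁}, lv, uv ∈ ℝ^{d₂} satisfy lu ≤ u ≤ uu and lv ≤ v ≤ uv entrywise. Then, entrywise, lu⁺(lv⁺)ᵀ + uu⁺(lv⁻)ᵀ + lu⁻(uv⁺)ᵀ + uu⁻(uv⁻)ᵀ ≤ u vᵀ ≤ uu⁺(uv⁺)ᵀ + lu⁺(uv⁻)ᵀ + uu⁻(lv⁺)ᵀ + lu⁻(lv⁻)ᵀ. -/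
/-!
Split `u i = (u i)⁺ + (u i)⁻` and `v j = (v j)⁺ + (v j)⁻` and expand the product into four
terms. Both parts are monotone, so they inherit the interval bounds; each of the four products
has factors of known sign, hence is bounded separately on each side by products of endpoints.
-/

/-- entrywise interval bounds on the rank-1 matrix `u vᵀ` from entrywise
interval bounds `lu ≤ u ≤ uu`, `lv ≤ v ≤ uv`, using componentwise positive parts
(`x⁺ᵢ = max (xᵢ) 0`) and negative parts (`x⁻ᵢ = min (xᵢ) 0`):
`lu⁺(lv⁺)ᵀ + uu⁺(lv⁻)ᵀ + lu⁻(uv⁺)ᵀ + uu⁻(uv⁻)ᵀ ≤ u vᵀ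
   ≤ uu⁺(uv⁺)ᵀ + lu⁺(uv⁻)ᵀ + uu⁻(lv⁺)ᵀ + lu⁻(lv⁻)ᵀ`. -/
theorem rank1_interval_bounds (d₁ d₂ : ℕ) (u lu uu : Fin d₁ → ℝ) (v lv uv : Fin d₂ → ℝ)
    (hu : ∀ i, lu i ≤ u i ∧ u i ≤ uu i) (hv : ∀ j, lv j ≤ v j ∧ v j ≤ uv j) :
    ∀ i j,
      max (lu i) 0 * max (lv j) 0 + max (uu i) 0 * min (lv j) 0 +
        min (lu i) 0 * max (uv j) 0 + min (uu i) 0 * min (uv j) 0 ≤ u i * v j ∧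
      u i * v j ≤
        max (uu i) 0 * max (uv j) 0 + max (lu i) 0 * min (uv j) 0 +
          min (uu i) 0 * max (lv j) 0 + min (lu i) 0 * min (lv j) 0 := by
  intro i j
  obtain ⟨hlu, huu⟩ := hu i
  obtain ⟨hlv, huv⟩ := hv j
  have split : u i * v j = max (u i) 0 * max (v j) 0 + max (u i) 0 * min (v j) 0 +
      min (u i) 0 * max (v j) 0 + min (u i) 0 * min (v j) 0 := by
    linear_combination (-v j) * max_add_min (u i) 0 -
      (max (u i) 0 + min (u i) 0) * max_add_min (v j) 0
  have pos : ∀ a : ℝ, 0 ≤ max a 0 := fun a => le_max_right a 0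
  have neg : ∀ a : ℝ, min a 0 ≤ 0 := fun a => min_le_right a 0
  have pmono : ∀ {a b : ℝ}, a ≤ b → max a 0 ≤ max b 0 := fun h => max_le_max_right 0 h
  have nmono : ∀ {a b : ℝ}, a ≤ b → min a 0 ≤ min b 0 := fun h => min_le_min_right 0 h
  -- Monotonicity of the product on each sign quadrant of the two factors.
  have pp : ∀ {a b c d : ℝ}, a ≤ b → c ≤ d → max a 0 * max c 0 ≤ max b 0 * max d 0 :=
    fun h k => mul_le_mul (pmono h) (pmono k) (pos _) (pos _)
  have pn : ∀ {a b c d : ℝ}, a ≤ b → c ≤ d → max b 0 * min c 0 ≤ max a 0 * min d 0 := by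
    intro a b c d h k
    nlinarith [mul_nonneg (sub_nonneg.2 (pmono h)) (neg_nonneg.2 (neg c)),
      mul_nonneg (pos a) (sub_nonneg.2 (nmono k))]
  have np : ∀ {a b c d : ℝ}, a ≤ b → c ≤ d → min a 0 * max d 0 ≤ min b 0 * max c 0 := by
    intro a b c d h k
    rw [mul_comm, mul_comm (min b 0)]
    exact pn k h
  have nn : ∀ {a b c d : ℝ}, a ≤ b → c ≤ d → min b 0 * min d 0 ≤ min a 0 * min c 0 :=
    fun h k => mul_le_mul_of_nonpos_of_nonpos (nmono h) (nmono k) (neg _) (neg _)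
  rw [split]
  exact ⟨add_le_add (add_le_add (add_le_add (pp hlu hlv) (pn huu hlv)) (np hlu huv)) (nn huu huv),
    add_le_add (add_le_add (add_le_add (pp huu huv) (pn hlu huv)) (np huu hlv)) (nn hlu hlv)⟩
end

section
/- Let f be an N-degree CCP polynomial network on ℝ^d with hidden size k: x^{(1)}(z) = W₁ᵀz and x^{(n)}(z) = (Wₙᵀ z + 1) ⊙ x^{(n-1)}(z) componentwise for 2 ≤ n ≤ N, f(z) = C x^{(N)}(z) + β, and g(z) = f(z)_t − f(z)_γ for two output indices t ≠ γ. Fix a box [l, u] ⊂ ℝ^d. Suppose for each layer n ∈ {1, …, N−1} and each i ∈ {1, …, k} there is a nonnegative vector G^{(n)}_i ∈ ℝ^d with |∇ x_i^{(n)}(z)| ≤ G^{(n)}_i entrywise for all z ∈ [l,u], and for each n ∈ {2, …, N} a scalar m^{(n)}_i ≥ |w_{[n]:i}ᵀ z + 1| for all z ∈ [l,u], where w_{[n]:i} is the i-th column of Wₙ. Define recursively M^{(1)}_i = 0 ∈ ℝ^{d×d} and M^{(n)}_i = G^{(n-1)}_i |w_{[n]:i}|ᵀ + |w_{[n]:i}|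 (G^{(n-1)}_i)ᵀ + m^{(n)}_i M^{(n-1)}_i for 2 ≤ n ≤ N. Then for every z ∈ [l,u], the Hessian H_g(z) of g satisfies |H_g(z)| ≤ Σ_{i=1}^{k} |c_{t i} − c_{γ i}| · M^{(N)}_i entrywise. -/
/-!
The Hessian entries of each hidden unit are bounded by induction on the layer. The first layer is
linear, so its Hessian vanishes. In the step, `x^{(n)} = a · x^{(n-1)}` with
`a z = ⟨w, z⟩ + 1` affine, so the Leibniz rule applied twice gives
`∂ⱼ∂ⱼ' x^{(n)} = ∂ⱼ x^{(n-1)} · wⱼ' + wⱼ · ∂ⱼ' x^{(n-1)} + a · ∂ⱼ∂ⱼ' x^{(n-1)}`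
(`hessAt_affine_mul`), and the triangle inequality reproduces the recursion of `ccpHessBound`.
The objective is, up to a constant, the combination of the last hidden units with coefficients
`C t i - C γ i`, and the Hessian is linear (`hessAt_sum_mul_add_const`).
-/

/-- The hidden states of a CCP polynomial network with weight matrices `W n ∈ ℝ^{d×k}`:
`x^{(1)}(z) = W₁ᵀ z` and `x^{(n)}(z) = (Wₙᵀ z + 1) ⊙ x^{(n-1)}(z)` componentwise. -/
noncomputable def ccpX (d k : ℕ) (W : ℕ → Matrix (Fin d) (Fin k) ℝ) :
    ℕ → (Fin d → ℝ) → Fin k → ℝ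
  | 0, _, _ => 0
  | 1, z, i => ∑ j, W 1 j i * z j
  | n + 2, z, i => ((∑ j, W (n + 2) j i * z j) + 1) * ccpX d k W (n + 1) z i

/-- The directional partial derivative `∂f/∂z_j` of `f : ℝ^d → ℝ` at `z`. -/
noncomputable def gradAt {d : ℕ} (f : (Fin d → ℝ) → ℝ) (z : Fin d → ℝ) (j : Fin d) : ℝ :=
  fderiv ℝ f z (Pi.single j 1)

/-- The Hessian entry `(j, j')` of `f : ℝ^d → ℝ` at `z`. -/
noncomputable def hessAt {d : ℕ} (f : (Fin d → ℝ) → ℝ) (z : Fin d → ℝ) (j j' : Fin d) : ℝ :=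
  fderiv ℝ (fun w => fderiv ℝ f w (Pi.single j' 1)) z (Pi.single j 1)

/-- The recursive entrywise Hessian bound:  `M^{(1)}_i = 0` and
`M^{(n)}_i = G^{(n-1)}_i |w_{[n]:i}|ᵀ + |w_{[n]:i}| (G^{(n-1)}_i)ᵀ + m^{(n)}_i M^{(n-1)}_i`. -/
noncomputable def ccpHessBound (d k : ℕ) (W : ℕ → Matrix (Fin d) (Fin k) ℝ)
    (G : ℕ → Fin k → Fin d → ℝ) (m : ℕ → Fin k → ℝ) :
    ℕ → Fin k → Fin d → Fin d → ℝ
  | 0, _, _, _ => 0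
  | 1, _, _, _ => 0
  | n + 2, i, j, j' =>
      G (n + 1) i j * |W (n + 2) j' i| + |W (n + 2) j i| * G (n + 1) i j' +
        m (n + 2) i * ccpHessBound d k W G m (n + 1) i j j'

lemma ccpX_contDiff (d k : ℕ) (W : ℕ → Matrix (Fin d) (Fin k) ℝ) (i : Fin k) :
    ∀ n, ContDiff ℝ 2 (fun w => ccpX d k W n w i)
  | 0 => by simpa only [ccpX] using contDiff_const
  | 1 => by simp only [ccpX]; fun_prop
  | n + 2 => by
    have := ccpX_contDiff d k W i (n + 1)
    simp only [ccpX]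
    fun_prop

lemma differentiable_fderiv_apply {d : ℕ} {f : (Fin d → ℝ) → ℝ} (hf : ContDiff ℝ 2 f)
    (v : Fin d → ℝ) : Differentiable ℝ (fun w => fderiv ℝ f w v) :=
  ((hf.fderiv_right (m := 1) (by norm_num)).clm_apply contDiff_const).differentiable
    (by norm_num)

lemma fderiv_affine {d : ℕ} (a : Fin d → ℝ) (b : ℝ) (z : Fin d → ℝ) (j : Fin d) :
    fderiv ℝ (fun w : Fin d → ℝ => (∑ p, a p * w p) + b) z (Pi.single j 1) = a j := by
  have h : HasFDerivAt (fun w : Fin d → ℝ => (∑ p, a p * w p) + b)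
      (∑ p, a p • ContinuousLinearMap.proj (R := ℝ) (φ := fun _ : Fin d => ℝ) p) z := by
    refine HasFDerivAt.add_const b (HasFDerivAt.fun_sum fun p _ => ?_)
    exact (hasFDerivAt_apply (𝕜 := ℝ) p z).const_mul (a p)
  rw [h.fderiv]
  simp [Pi.single_apply]

/-- Second-order Leibniz rule for a product with an affine factor, whose own Hessian vanishes. -/
lemma hessAt_affine_mul {d : ℕ} (a : Fin d → ℝ) (b : ℝ) {f : (Fin d → ℝ) → ℝ}
    (hf : ContDiff ℝ 2 f) (z : Fin d → ℝ) (j j' : Fin d) :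
    hessAt (fun w => ((∑ p, a p * w p) + b) * f w) z j j' =
      gradAt f z j * a j' + a j * gradAt f z j' +
        ((∑ p, a p * z p) + b) * hessAt f z j j' := by
  have hA : Differentiable ℝ (fun w : Fin d → ℝ => (∑ p, a p * w p) + b) := by fun_prop
  have hfd : Differentiable ℝ f := hf.differentiable (by norm_num)
  have hg := differentiable_fderiv_apply hf (Pi.single j' 1)
  have h1 : (fun w => fderiv ℝ (fun w => ((∑ p, a p * w p) + b) * f w) w (Pi.single j' 1)) =
      fun w => ((∑ p, a p * w p) + b) * fderiv ℝ f w (Pi.single j' 1) + f w * a j' := by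
    funext w
    rw [fderiv_fun_mul (hA w) (hfd w)]
    simp only [ContinuousLinearMap.add_apply, ContinuousLinearMap.smul_apply, smul_eq_mul,
      fderiv_affine]
  unfold hessAt gradAt
  rw [h1, fderiv_fun_add ((hA z).fun_mul (hg z)) ((hfd z).mul_const _),
    fderiv_fun_mul (hA z) (hg z), fderiv_mul_const (hfd z)]
  simp only [ContinuousLinearMap.add_apply, ContinuousLinearMap.smul_apply, smul_eq_mul,
    fderiv_affine]
  ring

lemma hessAt_linear {d : ℕ} (a : Fin d → ℝ) (z : Fin d → ℝ) (j j' : Fin d) :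
    hessAt (fun w => ∑ p, a p * w p) z j j' = 0 := by
  have h : (fun w => fderiv ℝ (fun w : Fin d → ℝ => ∑ p, a p * w p) w (Pi.single j' 1)) =
      fun _ => a j' := by
    funext w
    simpa using fderiv_affine a 0 w j'
  unfold hessAt
  rw [h]
  simp

lemma hessAt_sum_mul_add_const {d k : ℕ} (c : Fin k → ℝ) (b : ℝ)
    {f : Fin k → (Fin d → ℝ) → ℝ} (hf : ∀ i, ContDiff ℝ 2 (f i)) (z : Fin d → ℝ)
    (j j' : Fin d) :
    hessAt (fun w => (∑ i, c i * f i w) + b) z j j' = ∑ i, c i * hessAt (f i) z j j' := by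
  have hfd : ∀ i, Differentiable ℝ (f i) := fun i => (hf i).differentiable (by norm_num)
  have hg := fun i => differentiable_fderiv_apply (hf i) (Pi.single j' 1)
  have h1 : (fun w => fderiv ℝ (fun w => (∑ i, c i * f i w) + b) w (Pi.single j' 1)) =
      fun w => ∑ i, c i * fderiv ℝ (f i) w (Pi.single j' 1) := by
    funext w
    rw [fderiv_add_const, fderiv_fun_sum fun i _ => (hfd i w).const_mul (c i)]
    simp [fderiv_const_mul (hfd _ w)]
  unfold hessAt
  rw [h1, fderiv_fun_sum fun i _ => (hg i z).const_mul (c i)]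
  simp [fderiv_const_mul (hg _ z)]

/-- The entrywise Hessian bound for a single hidden unit, at a fixed point `z` where the gradient
and affine-factor bounds hold up to layer `N`. -/
lemma abs_hessAt_ccpX_le (d k N : ℕ) (W : ℕ → Matrix (Fin d) (Fin k) ℝ)
    (G : ℕ → Fin k → Fin d → ℝ) (m : ℕ → Fin k → ℝ) (i : Fin k) (z : Fin d → ℝ)
    (hG : ∀ n, 1 ≤ n → n ≤ N - 1 → ∀ j, |gradAt (fun w => ccpX d k W n w i) z j| ≤ G n i j)
    (hm : ∀ n, 2 ≤ n → n ≤ N → |(∑ j, W n j i * z j) + 1| ≤ m n i) (j j' : Fin d) :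
    ∀ n, n ≤ N →
      |hessAt (fun w => ccpX d k W n w i) z j j'| ≤ ccpHessBound d k W G m n i j j'
  | 0, _ => by simp [ccpX, ccpHessBound, hessAt]
  | 1, _ => by simp [ccpX, ccpHessBound, hessAt_linear]
  | n + 2, hn => by
    have ih := abs_hessAt_ccpX_le d k N W G m i z hG hm j j' (n + 1) (by omega)
    have hm' := hm (n + 2) (by omega) hn
    have hG' := hG (n + 1) (by omega) (by omega)
    simp only [ccpX, ccpHessBound]
    rw [hessAt_affine_mul (fun p => W (n + 2) p i) 1 (ccpX_contDiff d k W i (n + 1))]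
    refine (abs_add_three _ _ _).trans ?_
    simp only [abs_mul]
    have hm0 : 0 ≤ m (n + 2) i := (abs_nonneg _).trans hm'
    gcongr
    · exact hG' j
    · exact hG' j'

/-- Theorem `mn_PN`-style entrywise Hessian bound for CCP networks:  for the
verification objective `g(z) = f(z)_t − f(z)_γ` of an `N`-degree CCP network on a box
`[l, u]`, given nonnegative entrywise gradient bounds `G^{(n)}_i ≥ |∇x_i^{(n)}|` on the box
for `1 ≤ n ≤ N−1` and scalars `m^{(n)}_i ≥ |w_{[n]:i}ᵀ z + 1|` on the box for `2 ≤ n ≤ N`,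
the recursively defined matrices `M^{(n)}_i` satisfy
`|H_g(z)| ≤ Σᵢ |c_{t i} − c_{γ i}| · M^{(N)}_i` entrywise for all `z ∈ [l, u]`. -/
theorem ccp_hessian_maxnorm_bound (d k o N : ℕ) (hN : 1 ≤ N)
    (W : ℕ → Matrix (Fin d) (Fin k) ℝ) (C : Matrix (Fin o) (Fin k) ℝ) (β : Fin o → ℝ)
    (t γ : Fin o) (htγ : t ≠ γ)
    (l u : Fin d → ℝ)
    (G : ℕ → Fin k → Fin d → ℝ) (m : ℕ → Fin k → ℝ)
    (hGnonneg : ∀ n i j, 0 ≤ G n i j)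
    (hG : ∀ n, 1 ≤ n → n ≤ N - 1 → ∀ (i : Fin k) (z : Fin d → ℝ),
      (∀ j, l j ≤ z j ∧ z j ≤ u j) →
      ∀ j, |gradAt (fun w => ccpX d k W n w i) z j| ≤ G n i j)
    (hm : ∀ n, 2 ≤ n → n ≤ N → ∀ (i : Fin k) (z : Fin d → ℝ),
      (∀ j, l j ≤ z j ∧ z j ≤ u j) →
      |(∑ j, W n j i * z j) + 1| ≤ m n i) :
    ∀ z : Fin d → ℝ, (∀ j, l j ≤ z j ∧ z j ≤ u j) →
      ∀ j j',
        |hessAt (fun w =>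
            ((∑ i, C t i * ccpX d k W N w i) + β t) -
              ((∑ i, C γ i * ccpX d k W N w i) + β γ)) z j j'| ≤
          ∑ i, |C t i - C γ i| * ccpHessBound d k W G m N i j j' := by
  intro z hz j j'
  have h : (fun w => ((∑ i, C t i * ccpX d k W N w i) + β t) -
      ((∑ i, C γ i * ccpX d k W N w i) + β γ)) =
      fun w => (∑ i, (C t i - C γ i) * ccpX d k W N w i) + (β t - β γ) := by
    funext w
    simp only [sub_mul, Finset.sum_sub_distrib]
    ring
  rw [h, hessAt_sum_mul_add_const (fun i => C t i - C γ i) _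
    (fun i => ccpX_contDiff d k W i N)]
  refine (Finset.abs_sum_le_sum_abs _ _).trans (Finset.sum_le_sum fun i _ => ?_)
  rw [abs_mul]
  exact mul_le_mul_of_nonneg_left
    (abs_hessAt_ccpX_le d k N W G m i z (fun n h1 h2 => hG n h1 h2 i z hz)
      (fun n h1 h2 => hm n h1 h2 i z hz) j j' N le_rfl) (abs_nonneg _)
end

section
/- Let (l^{(q)}, u^{(q)})_{q≥0} be a sequence of boxes in ℝ^d with l^{(q)} ≤ u^{(q)} entrywise, generated by always bisecting the widest coordinate: for each q there is an index i_q attaining max_i (u^{(q)}_i − l^{(q)}_i) such that u^{(q+1)}_{i_q} − l^{(q+1)}_{i_q} = (u^{(q)}_{i_q} − l^{(q)}_{i_q})/2 and u^{(q+1)}_j − l^{(q+1)}_j = u^{(q)}_j − l^{(q)}_j for all j ≠ i_q. Then ‖u^{(q)} − l^{(q)}‖₂ → 0 as q → ∞; i.e., the Euclidean diameter of the boxes converges to 0. -/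
/-!
Let `S q` be the squared diameter. Halving the widest coordinate, of width `w`, lowers `S` by
`(3/4) w ^ 2`, and `S q ≤ d * w ^ 2` because `w` is maximal. Hence
`S (q + 1) ≤ (1 - 3 / (4 d)) * S q`, so `S` decays geometrically.
-/

open Filter

/-- widest-interval bisection shrinks boxes to zero diameter.  If a sequence of
boxes `[l^{(q)}, u^{(q)}] ⊂ ℝ^d` (with `l^{(q)} ≤ u^{(q)}` entrywise) is generated by always
halving a coordinate of maximal width while leaving every other width unchanged, then the
Euclidean diameter `‖u^{(q)} − l^{(q)}‖₂ = √(Σᵢ (u^{(q)}ᵢ − l^{(q)}ᵢ)²)` tends to `0`. -/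
theorem widest_interval_branching_convergent (d : ℕ) (l u : ℕ → Fin d → ℝ)
    (hlu : ∀ q i, l q i ≤ u q i)
    (hsplit : ∀ q, ∃ i : Fin d,
      (∀ j, u q j - l q j ≤ u q i - l q i) ∧
      u (q + 1) i - l (q + 1) i = (u q i - l q i) / 2 ∧
      ∀ j, j ≠ i → u (q + 1) j - l (q + 1) j = u q j - l q j) :
    Tendsto (fun q => Real.sqrt (∑ i, (u q i - l q i) ^ 2)) atTop (nhds 0) := by
  have hd : 0 < d := by
    obtain ⟨i, -⟩ := hsplit 0
    exact i.pos
  have hd1 : (1 : ℝ) ≤ d := by exact_mod_cast hd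
  have hd0 : (0 : ℝ) < d := by linarith
  set S : ℕ → ℝ := fun q => ∑ i, (u q i - l q i) ^ 2 with hS
  set c : ℝ := 1 - 3 / (4 * d) with hc
  have hfrac : 3 / (4 * (d : ℝ)) ≤ 1 := by
    rw [div_le_one (by positivity)]
    linarith
  have hc0 : 0 ≤ c := by linarith
  have hc1 : c < 1 := by
    have : 0 < 3 / (4 * (d : ℝ)) := by positivity
    linarith
  have hstep : ∀ q, S (q + 1) ≤ c * S q := by
    intro q
    obtain ⟨i, hmax, hhalf, hrest⟩ := hsplit q
    have hdrop : S (q + 1) = S q - 3 / 4 * (u q i - l q i) ^ 2 := by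
      have h1 := Finset.add_sum_erase Finset.univ
        (fun j => (u (q + 1) j - l (q + 1) j) ^ 2) (Finset.mem_univ i)
      have h2 := Finset.add_sum_erase Finset.univ
        (fun j => (u q j - l q j) ^ 2) (Finset.mem_univ i)
      have h3 : ∑ j ∈ Finset.univ.erase i, (u (q + 1) j - l (q + 1) j) ^ 2
          = ∑ j ∈ Finset.univ.erase i, (u q j - l q j) ^ 2 :=
        Finset.sum_congr rfl fun j hj => by rw [hrest j (Finset.ne_of_mem_erase hj)]
      simp only [hhalf, h3] at h1
      simp only [hS]
      linarith
    have hbound : S q ≤ d * (u q i - l q i) ^ 2 := by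
      have h := Finset.sum_le_card_nsmul Finset.univ (fun j => (u q j - l q j) ^ 2)
        ((u q i - l q i) ^ 2)
        fun j _ => pow_le_pow_left₀ (sub_nonneg.2 (hlu q j)) (hmax j) 2
      simpa using h
    have hquot : 3 / (4 * (d : ℝ)) * S q ≤ 3 / 4 * (u q i - l q i) ^ 2 := by
      calc 3 / (4 * (d : ℝ)) * S q
          ≤ 3 / (4 * (d : ℝ)) * (d * (u q i - l q i) ^ 2) := by gcongr
        _ = 3 / 4 * (u q i - l q i) ^ 2 := by field_simp
    rw [hdrop, hc, sub_mul, one_mul]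
    linarith
  have hgeom : ∀ q, S q ≤ c ^ q * S 0 := by
    intro q
    induction q with
    | zero => simp
    | succ q ih =>
      calc S (q + 1) ≤ c * S q := hstep q
        _ ≤ c * (c ^ q * S 0) := by gcongr
        _ = c ^ (q + 1) * S 0 := by ring
  have hlim : Tendsto S atTop (nhds 0) := by
    refine squeeze_zero (fun q => Finset.sum_nonneg fun i _ => sq_nonneg _) hgeom ?_
    simpa using (tendsto_pow_atTop_nhds_zero_of_lt_one hc0 hc1).mul_const (S 0)
  simpa using hlim.sqrt
end

section
/- Let L, U ∈ ℝ^{d×d} be symmetric with L ≤ U entrywise, and define the lower bounding Hessian L_H = (L + U)/2 + diag( ((L − U)·1)/2 ), where 1 is the all-ones vector (so the diagonal shift in row i is ½·Σ_j (Lᵢⱼ − Uᵢⱼ)). Then for every real symmetric matrix H with L ≤ H ≤ U entrywise, the matrix H − L_H is positive semidefinite; consequently λ_min(L_H) ≤ λ_min(H). -/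
/-!
Write `W = U - L ≥ 0`. Using the symmetry of `W` to replace `xᵢ²` by `(xᵢ² + xⱼ²)/2`, the quadratic
form of `H - L_H` at `x` equals
`∑ᵢⱼ ((Hᵢⱼ - (Lᵢⱼ + Uᵢⱼ)/2) xᵢ xⱼ + Wᵢⱼ (xᵢ² + xⱼ²)/4)`.
Each summand is nonnegative, because `|Hᵢⱼ - (Lᵢⱼ + Uᵢⱼ)/2| ≤ Wᵢⱼ/2` and `|xᵢ xⱼ| ≤ (xᵢ² + xⱼ²)/2`.

The eigenvalue inequality follows by monotonicity of the infimum of the Rayleigh quotient. Since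
`sInf` of a real set is only meaningful when the set is nonempty and bounded below, this needs a
lower bound for the quotient (`quadForm_bddBelow`) and a separate treatment of dimension zero.
-/

/-- The minimum eigenvalue of a real symmetric matrix, expressed as the infimum of the
Rayleigh quotient `xᵀ M x` over Euclidean-unit vectors `x`. -/
noncomputable def lamMin {n : ℕ} (M : Matrix (Fin n) (Fin n) ℝ) : ℝ :=
  sInf {r | ∃ x : Fin n → ℝ, (∑ i, (x i) ^ 2) = 1 ∧ r = ∑ i, ∑ j, x i * M i j * x j}

/-- The lower bounding Hessian `L_H = (L + U)/2 + diag(((L − U)·1)/2)` of the interval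
matrix `[L, U]`; its diagonal shift in row `i` is `½ Σⱼ (Lᵢⱼ − Uᵢⱼ)`. -/
noncomputable def lowerBoundingHessian {n : ℕ} (L U : Matrix (Fin n) (Fin n) ℝ) :
    Matrix (Fin n) (Fin n) ℝ :=
  Matrix.of fun i j =>
    (L i j + U i j) / 2 + (if i = j then (∑ l, (L i l - U i l)) / 2 else 0)

/-- The values of a quadratic form on the unit sphere are bounded below, by `-∑ᵢⱼ |Mᵢⱼ|`. -/
lemma quadForm_bddBelow {n : ℕ} (M : Matrix (Fin n) (Fin n) ℝ) :
    BddBelow {r | ∃ x : Fin n → ℝ, (∑ i, (x i) ^ 2) = 1 ∧ r = ∑ i, ∑ j, x i * M i j * x j} := by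
  refine ⟨∑ i, ∑ j, -|M i j|, ?_⟩
  rintro r ⟨x, hx, rfl⟩
  have hx1 : ∀ i, |x i| ≤ 1 := fun i => by
    rw [← sq_le_one_iff_abs_le_one, ← hx]
    exact Finset.single_le_sum (f := fun i => x i ^ 2) (fun j _ => sq_nonneg _) (Finset.mem_univ i)
  refine Finset.sum_le_sum fun i _ => Finset.sum_le_sum fun j _ => ?_
  have h : |x i * M i j * x j| ≤ |M i j| := by
    rw [abs_mul, abs_mul]
    calc |x i| * |M i j| * |x j| ≤ 1 * |M i j| * 1 := by
          gcongr
          · exact hx1 i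
          · exact hx1 j
      _ = |M i j| := by ring
  exact (abs_le.mp h).1

/-- The symmetrized form of `xᵀ (H - L_H) x`, in which every summand is nonnegative when
`L ≤ H ≤ U`. -/
lemma quadForm_sub_lowerBoundingHessian {n : ℕ} {L U : Matrix (Fin n) (Fin n) ℝ}
    (hLs : L.IsSymm) (hUs : U.IsSymm) (H : Matrix (Fin n) (Fin n) ℝ) (x : Fin n → ℝ) :
    ∑ i, ∑ j, x i * (H i j - lowerBoundingHessian L U i j) * x j =
      ∑ i, ∑ j, ((H i j - (L i j + U i j) / 2) * (x i * x j)
        + (U i j - L i j) / 4 * (x i ^ 2 + x j ^ 2)) := by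
  have hrow : ∀ i, ∑ j, x i * (H i j - lowerBoundingHessian L U i j) * x j =
      ∑ j, ((H i j - (L i j + U i j) / 2) * (x i * x j) + (U i j - L i j) / 2 * x i ^ 2) := by
    intro i
    have hterm : ∀ j, x i * (H i j - lowerBoundingHessian L U i j) * x j =
        (H i j - (L i j + U i j) / 2) * (x i * x j)
          - (if i = j then (∑ l, (L i l - U i l)) / 2 * (x i * x j) else 0) := by
      intro j
      simp only [lowerBoundingHessian, Matrix.of_apply]
      split_ifs <;> ring
    have hdiag : (∑ l, (L i l - U i l)) / 2 * (x i * x i) =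
        -∑ j, (U i j - L i j) / 2 * x i ^ 2 := by
      rw [Finset.sum_div, Finset.sum_mul, ← Finset.sum_neg_distrib]
      exact Finset.sum_congr rfl fun j _ => by ring
    rw [Finset.sum_congr rfl fun j _ => hterm j, Finset.sum_sub_distrib, Finset.sum_ite_eq,
      if_pos (Finset.mem_univ i), hdiag, sub_neg_eq_add, Finset.sum_add_distrib]
  have hswap : ∑ i, ∑ j, (U i j - L i j) / 4 * x i ^ 2 =
      ∑ i, ∑ j, (U i j - L i j) / 4 * x j ^ 2 := by
    rw [Finset.sum_comm]
    exact Finset.sum_congr rfl fun i _ => Finset.sum_congr rfl fun j _ => by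
      rw [hUs.apply, hLs.apply]
  have hhalf : ∑ i, ∑ j, (U i j - L i j) / 2 * x i ^ 2 =
      ∑ i, ∑ j, (U i j - L i j) / 4 * x i ^ 2 + ∑ i, ∑ j, (U i j - L i j) / 4 * x i ^ 2 := by
    simp only [← Finset.sum_add_distrib]
    exact Finset.sum_congr rfl fun i _ => Finset.sum_congr rfl fun j _ => by ring
  rw [Finset.sum_congr rfl fun i _ => hrow i]
  simp only [mul_add, Finset.sum_add_distrib]
  rw [hhalf, ← hswap]

/-- for symmetric `L ≤ U` entrywise and the lower bounding Hessian
`L_H = (L + U)/2 + diag(((L − U)·1)/2)`, every symmetric `H` with `L ≤ H ≤ U` entrywise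
satisfies that `H − L_H` is positive semidefinite; consequently
`λ_min(L_H) ≤ λ_min(H)`. -/
theorem lower_bounding_hessian_spec (d : ℕ) (L U : Matrix (Fin d) (Fin d) ℝ)
    (hLs : L.IsSymm) (hUs : U.IsSymm) (hLU : ∀ i j, L i j ≤ U i j) :
    ∀ H : Matrix (Fin d) (Fin d) ℝ, H.IsSymm →
      (∀ i j, L i j ≤ H i j ∧ H i j ≤ U i j) →
      (∀ x : Fin d → ℝ,
        0 ≤ ∑ i, ∑ j, x i * (H i j - lowerBoundingHessian L U i j) * x j) ∧
      lamMin (lowerBoundingHessian L U) ≤ lamMin H := by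
  intro H _ hH
  have hpsd : ∀ x : Fin d → ℝ,
      0 ≤ ∑ i, ∑ j, x i * (H i j - lowerBoundingHessian L U i j) * x j := by
    intro x
    rw [quadForm_sub_lowerBoundingHessian hLs hUs]
    refine Finset.sum_nonneg fun i _ => Finset.sum_nonneg fun j _ => ?_
    obtain ⟨h1, h2⟩ := hH i j
    -- The summand is `(H - L)/4 * (xᵢ + xⱼ)² + (U - H)/4 * (xᵢ - xⱼ)²`.
    nlinarith [mul_nonneg (sub_nonneg.2 h1) (sq_nonneg (x i + x j)),
      mul_nonneg (sub_nonneg.2 h2) (sq_nonneg (x i - x j))]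
  refine ⟨hpsd, ?_⟩
  rcases Nat.eq_zero_or_pos d with rfl | hd
  · -- There are no unit vectors in dimension zero, so both infima are `sInf ∅ = 0`.
    simp [lamMin]
  · refine le_csInf ?_ ?_
    · exact ⟨_, Pi.single ⟨0, hd⟩ 1, by simp [Pi.single_apply], rfl⟩
    · rintro r ⟨x, hx, rfl⟩
      refine (csInf_le (quadForm_bddBelow _) ⟨x, hx, rfl⟩).trans ?_
      have h := hpsd x
      simp only [mul_sub, sub_mul, Finset.sum_sub_distrib] at h
      linarith
end

section
/- Let X₁, …, X_k ∈ ℝ^{d×d} be symmetric, c₁, …, c_k ∈ ℝ, let A ∈ ℝ^{m×m} be symmetric, and let B ∈ ℝ^{m×d}. Suppose Ĵ ∈ ℝ^{m×d} is a nonnegative matrix with |Bᵢⱼ| ≤ Ĵᵢⱼ for all i, j, and suppose lA, uA ∈ ℝ^{m×m} are symmetric with lA ≤ A ≤ uA entrywise; let L = (lA + uA)/2 + diag( ((lA − uA)·1)/2 ) be the lower bounding Hessian of this interval. Then λ_min( Σ_{j=1}^k c_j X_j + BᵀAB ) ≥ Σ_{j=1}^k λ_min( c_j X_j ) − ρ(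 Ĵ Ĵᵀ ) · ρ( L ). -/
/-!
For a unit vector `x` put `y = B x`, so that the quadratic form of `Σ cⱼ Xⱼ + Bᵀ A B` at `x` is
`Σ xᵀ(cⱼ Xⱼ)x + yᵀ A y`. Each term of the sum is at least `λ_min(cⱼ Xⱼ)`. The lower bounding
Hessian satisfies `yᵀ L y ≤ yᵀ A y` (`lowerBoundingHessian_le`): the deviation of `A` from the
interval midpoint is dominated entrywise by the radius matrix, and `2|yᵢ yⱼ| ≤ yᵢ² + yⱼ²`.
Hence `yᵀ A y ≥ -ρ(L) |y|²`.

It remains to see `|y|² ≤ ρ(Ĵ Ĵᵀ)`. Entrywise `|y| ≤ z := Ĵ |x|`, and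
`|z|² = ⟨Ĵᵀ z, |x|⟩` gives `|z|⁴ ≤ |Ĵᵀ z|² |x|² = (zᵀ Ĵ Ĵᵀ z) |x|² ≤ ρ(Ĵ Ĵᵀ) |z|² |x|²`
by Cauchy–Schwarz (`sum_sq_mulVec_le`); no spectral theory is needed.
-/

open Matrix

/-- The spectral radius of a real symmetric matrix, expressed as the supremum of the absolute
Rayleigh quotient `|xᵀ M x|` over Euclidean-unit vectors `x` (for symmetric matrices this is
the maximum absolute value of the eigenvalues, i.e. the operator 2-norm). -/
noncomputable def specRad {n : ℕ} (M : Matrix (Fin n) (Fin n) ℝ) : ℝ :=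
  sSup {r | ∃ x : Fin n → ℝ, (∑ i, (x i) ^ 2) = 1 ∧ r = |∑ i, ∑ j, x i * M i j * x j|}

/-- The quadratic form `xᵀ M x`, written as in `lamMin` and `specRad`. -/
def quadForm {n : ℕ} (M : Matrix (Fin n) (Fin n) ℝ) (x : Fin n → ℝ) : ℝ :=
  ∑ i, ∑ j, x i * M i j * x j

lemma quadForm_eq {n : ℕ} (M : Matrix (Fin n) (Fin n) ℝ) (x : Fin n → ℝ) :
    quadForm M x = x ⬝ᵥ (M *ᵥ x) := by
  simp only [quadForm, dotProduct, mulVec, Finset.mul_sum, mul_assoc]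

/-- A crude bound whose role is to make the sets in `lamMin` and `specRad` bounded. -/
lemma abs_quadForm_le {n : ℕ} (M : Matrix (Fin n) (Fin n) ℝ) (x : Fin n → ℝ)
    (hx : ∑ i, (x i) ^ 2 = 1) : |quadForm M x| ≤ ∑ i, ∑ j, |M i j| := by
  have h1 : ∀ i, |x i| ≤ 1 := by
    intro i
    rw [← sq_le_one_iff_abs_le_one, ← hx]
    exact Finset.single_le_sum (f := fun i => (x i) ^ 2) (fun j _ => sq_nonneg _)
      (Finset.mem_univ i)
  refine (Finset.abs_sum_le_sum_abs _ _).trans (Finset.sum_le_sum fun i _ => ?_)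
  refine (Finset.abs_sum_le_sum_abs _ _).trans (Finset.sum_le_sum fun j _ => ?_)
  rw [abs_mul, abs_mul]
  calc |x i| * |M i j| * |x j| ≤ 1 * |M i j| * 1 := by
        gcongr
        · exact h1 i
        · exact h1 j
    _ = |M i j| := by ring

lemma lamMin_le {n : ℕ} (M : Matrix (Fin n) (Fin n) ℝ) (x : Fin n → ℝ)
    (hx : ∑ i, (x i) ^ 2 = 1) : lamMin M ≤ quadForm M x := by
  refine csInf_le ⟨-∑ i, ∑ j, |M i j|, ?_⟩ ⟨x, hx, rfl⟩
  rintro r ⟨y, hy, rfl⟩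
  exact (abs_le.1 (abs_quadForm_le M y hy)).1

lemma specRad_nonneg {n : ℕ} (M : Matrix (Fin n) (Fin n) ℝ) : 0 ≤ specRad M := by
  refine Real.sSup_nonneg ?_
  rintro r ⟨y, -, rfl⟩
  exact abs_nonneg _

lemma abs_quadForm_le_specRad {n : ℕ} (M : Matrix (Fin n) (Fin n) ℝ) (y : Fin n → ℝ) :
    |quadForm M y| ≤ specRad M * ∑ i, (y i) ^ 2 := by
  have hs0 : 0 ≤ ∑ i, (y i) ^ 2 := Finset.sum_nonneg fun i _ => sq_nonneg _
  set s := ∑ i, (y i) ^ 2 with hs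
  rcases hs0.eq_or_lt with h0 | hpos
  · have hy : ∀ i, y i = 0 := by
      intro i
      have := (Finset.sum_eq_zero_iff_of_nonneg (fun i _ => sq_nonneg (y i))).1
        (hs.symm.trans h0.symm) i (Finset.mem_univ i)
      exact pow_eq_zero_iff (two_ne_zero) |>.1 this
    simp [quadForm, hy, ← h0]
  · have hsq : (√s)⁻¹ ^ 2 = s⁻¹ := by rw [inv_pow, Real.sq_sqrt hs0]
    have hunit : ∑ i, ((√s)⁻¹ * y i) ^ 2 = 1 := by
      simp only [mul_pow, ← Finset.mul_sum, hsq]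
      exact inv_mul_cancel₀ hpos.ne'
    have hscale : quadForm M (fun i => (√s)⁻¹ * y i) = s⁻¹ * quadForm M y := by
      simp only [quadForm, ← hsq, Finset.mul_sum]
      refine Finset.sum_congr rfl fun i _ => Finset.sum_congr rfl fun j _ => ?_
      ring
    have hle : |quadForm M (fun i => (√s)⁻¹ * y i)| ≤ specRad M := by
      refine le_csSup ⟨∑ i, ∑ j, |M i j|, ?_⟩ ⟨_, hunit, rfl⟩
      rintro r ⟨z, hz, rfl⟩
      exact abs_quadForm_le M z hz
    rw [hscale, abs_mul, abs_of_pos (inv_pos.2 hpos), inv_mul_eq_div, div_le_iff₀ hpos] at hle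
    exact hle

/-- The lower bounding Hessian lies below every member of the interval in the Loewner order. -/
lemma lowerBoundingHessian_le {m : ℕ} (A lA uA : Matrix (Fin m) (Fin m) ℝ)
    (hlAs : lA.IsSymm) (huAs : uA.IsSymm)
    (hlA : ∀ i j, lA i j ≤ A i j) (huA : ∀ i j, A i j ≤ uA i j) (y : Fin m → ℝ) :
    quadForm (lowerBoundingHessian lA uA) y ≤ quadForm A y := by
  have hL : quadForm (lowerBoundingHessian lA uA) y =
      ∑ i, ∑ j, (y i * ((lA i j + uA i j) / 2) * y j + (lA i j - uA i j) / 2 * y i ^ 2) := by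
    unfold quadForm lowerBoundingHessian
    refine Finset.sum_congr rfl fun i _ => ?_
    simp only [of_apply, mul_add, add_mul, Finset.sum_add_distrib, mul_ite, ite_mul, mul_zero,
      zero_mul, Finset.sum_ite_eq, Finset.mem_univ, if_true, ← Finset.sum_mul, ← Finset.sum_div]
    ring
  -- symmetry of the radius matrix lets the diagonal correction be shared between `i` and `j`
  have hswap : ∑ i, ∑ j, (lA i j - uA i j) / 2 * y i ^ 2 =
      ∑ i, ∑ j, (lA i j - uA i j) / 2 * ((y i ^ 2 + y j ^ 2) / 2) := by
    have h : ∑ i, ∑ j, (lA i j - uA i j) / 2 * y i ^ 2 =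
        ∑ i, ∑ j, (lA i j - uA i j) / 2 * y j ^ 2 := by
      rw [Finset.sum_comm]
      refine Finset.sum_congr rfl fun i _ => Finset.sum_congr rfl fun j _ => ?_
      rw [hlAs.apply, huAs.apply]
    have h2 : ∑ i, ∑ j, (lA i j - uA i j) / 2 * ((y i ^ 2 + y j ^ 2) / 2) =
        (∑ i, ∑ j, (lA i j - uA i j) / 2 * y i ^ 2 +
          ∑ i, ∑ j, (lA i j - uA i j) / 2 * y j ^ 2) / 2 := by
      simp only [← Finset.sum_add_distrib, Finset.sum_div]
      refine Finset.sum_congr rfl fun i _ => Finset.sum_congr rfl fun j _ => ?_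
      ring
    rw [h2, ← h]
    ring
  rw [hL]
  simp only [Finset.sum_add_distrib]
  rw [hswap]
  simp only [← Finset.sum_add_distrib]
  refine Finset.sum_le_sum fun i _ => Finset.sum_le_sum fun j _ => ?_
  nlinarith [mul_nonneg (sub_nonneg.2 (hlA i j)) (sq_nonneg (y i + y j)),
    mul_nonneg (sub_nonneg.2 (huA i j)) (sq_nonneg (y i - y j))]

lemma sum_sq_mulVec_le {m d : ℕ} (J : Matrix (Fin m) (Fin d) ℝ) (u : Fin d → ℝ) :
    ∑ i, ((J *ᵥ u) i) ^ 2 ≤ specRad (J * Jᵀ) * ∑ i, (u i) ^ 2 := by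
  set z := J *ᵥ u with hz
  have hself : ∀ {n : ℕ} (v : Fin n → ℝ), ∑ i, (v i) ^ 2 = v ⬝ᵥ v := fun v => by
    simp only [dotProduct, sq]
  have hz1 : ∑ i, (z i) ^ 2 = ∑ j, (Jᵀ *ᵥ z) j * u j := by
    change _ = (Jᵀ *ᵥ z) ⬝ᵥ u
    rw [hself, mulVec_transpose, ← dotProduct_mulVec]
  have hJz : ∑ j, ((Jᵀ *ᵥ z) j) ^ 2 = quadForm (J * Jᵀ) z := by
    rw [quadForm_eq, hself, ← mulVec_mulVec, dotProduct_mulVec z J, ← mulVec_transpose]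
  have hcs := Finset.sum_mul_sq_le_sq_mul_sq Finset.univ (Jᵀ *ᵥ z) u
  rw [← hz1, hJz] at hcs
  have hρ := (le_abs_self _).trans (abs_quadForm_le_specRad (J * Jᵀ) z)
  have hu : 0 ≤ ∑ i, (u i) ^ 2 := Finset.sum_nonneg fun i _ => sq_nonneg _
  have hz0 : 0 ≤ ∑ i, (z i) ^ 2 := Finset.sum_nonneg fun i _ => sq_nonneg _
  rcases hz0.eq_or_lt with h0 | hpos
  · rw [← h0]
    exact mul_nonneg (specRad_nonneg _) hu
  · have := hcs.trans (mul_le_mul_of_nonneg_right hρ hu)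
    refine le_of_mul_le_mul_left ?_ hpos
    linarith

/-- minimum eigenvalue bound for the product-of-polynomials Hessian
structure: for symmetric `X₁, …, X_k`, reals `c₁, …, c_k`, symmetric `A`, and `B`, with a
nonnegative matrix `Ĵ` dominating `|B|` entrywise and symmetric interval bounds
`lA ≤ A ≤ uA` with lower bounding Hessian `L`, we have
`λ_min(Σⱼ cⱼ Xⱼ + Bᵀ A B) ≥ Σⱼ λ_min(cⱼ Xⱼ) − ρ(Ĵ Ĵᵀ)·ρ(L)`. -/
theorem lamMin_prod_poly_bound (k d m : ℕ)
    (X : Fin k → Matrix (Fin d) (Fin d) ℝ) (c : Fin k → ℝ)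
    (A : Matrix (Fin m) (Fin m) ℝ) (B Jhat : Matrix (Fin m) (Fin d) ℝ)
    (hX : ∀ j, (X j).IsSymm) (hA : A.IsSymm)
    (hJnonneg : ∀ i j, 0 ≤ Jhat i j) (hJB : ∀ i j, |B i j| ≤ Jhat i j)
    (lA uA : Matrix (Fin m) (Fin m) ℝ) (hlAs : lA.IsSymm) (huAs : uA.IsSymm)
    (hlA : ∀ i j, lA i j ≤ A i j) (huA : ∀ i j, A i j ≤ uA i j) :
    (∑ j, lamMin (c j • X j)) - specRad (Jhat * Jhatᵀ) * specRad (lowerBoundingHessian lA uA)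
      ≤ lamMin ((∑ j, c j • X j) + Bᵀ * A * B) := by
  rcases Nat.eq_zero_or_pos d with rfl | hd
  · -- in dimension `0` there are no unit vectors, and every `lamMin` is `sInf ∅ = 0`
    have h0 : ∀ M : Matrix (Fin 0) (Fin 0) ℝ, lamMin M = 0 := fun M => by simp [lamMin]
    simp only [h0, Finset.sum_const_zero, zero_sub, neg_nonpos]
    exact mul_nonneg (specRad_nonneg _) (specRad_nonneg _)
  · refine le_csInf ⟨_, Pi.single ⟨0, hd⟩ 1, ?_, rfl⟩ ?_
    · simp [Pi.single_apply]
    rintro r ⟨x, hx, rfl⟩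
    change _ ≤ quadForm _ x
    have hsplit : quadForm ((∑ j, c j • X j) + Bᵀ * A * B) x =
        (∑ j, quadForm (c j • X j) x) + quadForm A (B *ᵥ x) := by
      simp only [quadForm_eq]
      rw [add_mulVec, dotProduct_add, sum_mulVec, dotProduct_sum, ← mulVec_mulVec,
        ← mulVec_mulVec, dotProduct_mulVec x Bᵀ, vecMul_transpose]
    have hsum : ∑ j, lamMin (c j • X j) ≤ ∑ j, quadForm (c j • X j) x :=
      Finset.sum_le_sum fun j _ => lamMin_le _ x hx
    have hAL := lowerBoundingHessian_le A lA uA hlAs huAs hlA huA (B *ᵥ x)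
    have hL := (abs_le.1 (abs_quadForm_le_specRad (lowerBoundingHessian lA uA) (B *ᵥ x))).1
    have hB : ∑ i, ((B *ᵥ x) i) ^ 2 ≤ specRad (Jhat * Jhatᵀ) := by
      have hJ := sum_sq_mulVec_le Jhat (fun j => |x j|)
      simp only [sq_abs, hx, mul_one] at hJ
      refine (Finset.sum_le_sum fun i _ => ?_).trans hJ
      refine sq_le_sq.2 (le_trans ?_ (le_abs_self _))
      simp only [mulVec, dotProduct]
      refine (Finset.abs_sum_le_sum_abs _ _).trans (Finset.sum_le_sum fun j _ => ?_)
      rw [abs_mul]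
      exact mul_le_mul_of_nonneg_right (hJB i j) (abs_nonneg _)
    have hmul := mul_le_mul_of_nonneg_left hB (specRad_nonneg (lowerBoundingHessian lA uA))
    rw [hsplit]
    linarith
end

section
/- Let f be an N-degree CCP polynomial network: x^{(1)}(z) = W₁ᵀz, x^{(n)}(z) = (Wₙᵀ z + 1) ⊙ x^{(n-1)}(z) for 2 ≤ n ≤ N, f(z) = C x^{(N)}(z) + β. Fix a box [l, u] ⊂ ℝ^d and define interval bounds recursively: aₙ = (Wₙᵀ)⁺ l + (Wₙᵀ)⁻ u and bₙ = (Wₙᵀ)⁺ u + (Wₙᵀ)⁻ l (so aₙ ≤ Wₙᵀ z ≤ bₙ for z ∈ [l,u]); L^{(1)} = a₁, U^{(1)} = b₁; and for n ≥ 2, coordinatewise L^{(n)}_i = min Sᵢ and U^{(n)}_i = max Sᵢ with Sᵢ = { ((aₙ)ᵢ+1)L^{(n-1)}_i, ((aₙ)ᵢ+1)U^{(n-1)}_i, ((bₙ)ᵢ+1)L^{(n-1)}_i, ((bₙ)ᵢ+1)U^{(n-1)}_i }. Then for every z ∈ [l, u] and every n: L^{(n)} ≤ x^{(n)}(z) ≤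 U^{(n)} entrywise, and consequently C⁺L^{(N)} + C⁻U^{(N)} + β ≤ f(z) ≤ C⁺U^{(N)} + C⁻L^{(N)} + β entrywise. -/
/-- Interval bound propagation through the CCP recursion on the box `[l, u]`:  with
`aₙ = (Wₙᵀ)⁺ l + (Wₙᵀ)⁻ u` and `bₙ = (Wₙᵀ)⁺ u + (Wₙᵀ)⁻ l`, the lower/upper bound pair
`(L^{(n)}, U^{(n)})` is `(a₁, b₁)` for `n = 1` and is obtained coordinatewise for `n ≥ 2`
as the min/max of the four products `((aₙ)ᵢ+1)·L^{(n-1)}ᵢ, …, ((bₙ)ᵢ+1)·U^{(n-1)}ᵢ`. -/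
noncomputable def ccpIBP (d k : ℕ) (W : ℕ → Matrix (Fin d) (Fin k) ℝ) (l u : Fin d → ℝ) :
    ℕ → (Fin k → ℝ) × (Fin k → ℝ)
  | 0 => (0, 0)
  | 1 => (fun i => ∑ j, (max (W 1 j i) 0 * l j + min (W 1 j i) 0 * u j),
          fun i => ∑ j, (max (W 1 j i) 0 * u j + min (W 1 j i) 0 * l j))
  | n + 2 =>
      let p := ccpIBP d k W l u (n + 1)
      let a : Fin k → ℝ := fun i => ∑ j, (max (W (n + 2) j i) 0 * l j + min (W (n + 2) j i) 0 * u j)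
      let b : Fin k → ℝ := fun i => ∑ j, (max (W (n + 2) j i) 0 * u j + min (W (n + 2) j i) 0 * l j)
      (fun i => min (min ((a i + 1) * p.1 i) ((a i + 1) * p.2 i))
                    (min ((b i + 1) * p.1 i) ((b i + 1) * p.2 i)),
       fun i => max (max ((a i + 1) * p.1 i) ((a i + 1) * p.2 i))
                    (max ((b i + 1) * p.1 i) ((b i + 1) * p.2 i)))

theorem linear_form_bounds {ι : Type*} [Fintype ι] (w y l u : ι → ℝ)
    (h : ∀ j, l j ≤ y j ∧ y j ≤ u j) :
    ∑ j, (max (w j) 0 * l j + min (w j) 0 * u j) ≤ ∑ j, w j * y j ∧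
      ∑ j, w j * y j ≤ ∑ j, (max (w j) 0 * u j + min (w j) 0 * l j) := by
  constructor <;> refine Finset.sum_le_sum fun j _ => ?_ <;> obtain ⟨h₁, h₂⟩ := h j <;>
    rcases le_total (w j) 0 with hw | hw <;> simp only [hw, max_eq_left, max_eq_right,
      min_eq_left, min_eq_right] <;> nlinarith

theorem mul_bounds_endpoints {a b s : ℝ} (p : ℝ) (ha : a ≤ s) (hb : s ≤ b) :
    min (a * p) (b * p) ≤ s * p ∧ s * p ≤ max (a * p) (b * p) := by
  rw [min_le_iff, le_max_iff]
  rcases le_total 0 p with hp | hp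
  · exact ⟨.inl (mul_le_mul_of_nonneg_right ha hp), .inr (mul_le_mul_of_nonneg_right hb hp)⟩
  · exact ⟨.inr (mul_le_mul_of_nonpos_right hb hp), .inl (mul_le_mul_of_nonpos_right ha hp)⟩

/-- The corners are reached by moving first `x`, with `s` fixed, and then `s` to an endpoint. -/
theorem mul_bounds_corners {a b s p q x : ℝ} (ha : a ≤ s) (hb : s ≤ b) (hp : p ≤ x)
    (hq : x ≤ q) :
    min (min (a * p) (a * q)) (min (b * p) (b * q)) ≤ s * x ∧
      s * x ≤ max (max (a * p) (a * q)) (max (b * p) (b * q)) := by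
  have hx := mul_bounds_endpoints s hp hq
  rw [mul_comm p, mul_comm q, mul_comm x] at hx
  have h₁ := mul_bounds_endpoints p ha hb
  have h₂ := mul_bounds_endpoints q ha hb
  rw [min_min_min_comm, max_max_max_comm]
  exact ⟨(min_le_min h₁.1 h₂.1).trans hx.1, hx.2.trans (max_le_max h₁.2 h₂.2)⟩

theorem ccpX_bounds (d k : ℕ) (W : ℕ → Matrix (Fin d) (Fin k) ℝ) (l u z : Fin d → ℝ)
    (hz : ∀ j, l j ≤ z j ∧ z j ≤ u j) (n : ℕ) (i : Fin k) :
    (ccpIBP d k W l u (n + 1)).1 i ≤ ccpX d k W (n + 1) z i ∧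
      ccpX d k W (n + 1) z i ≤ (ccpIBP d k W l u (n + 1)).2 i := by
  induction n with
  | zero => simpa only [ccpIBP, ccpX] using linear_form_bounds (fun j => W 1 j i) z l u hz
  | succ n ih =>
    have h := linear_form_bounds (fun j => W (n + 2) j i) z l u hz
    simpa only [ccpIBP, ccpX] using
      mul_bounds_corners (add_le_add_left h.1 1) (add_le_add_left h.2 1) ih.1 ih.2

/-- soundness of interval bound propagation through a CCP network: for every
`z` in the box `[l, u]` and every layer `n ≥ 1`, `L^{(n)} ≤ x^{(n)}(z) ≤ U^{(n)}` entrywise,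
and consequently the network output `f(z) = C x^{(N)}(z) + β` satisfies
`C⁺L^{(N)} + C⁻U^{(N)} + β ≤ f(z) ≤ C⁺U^{(N)} + C⁻L^{(N)} + β` entrywise. -/
theorem ccp_ibp_sound (d k o N : ℕ) (hN : 1 ≤ N)
    (W : ℕ → Matrix (Fin d) (Fin k) ℝ) (C : Matrix (Fin o) (Fin k) ℝ) (β : Fin o → ℝ)
    (l u : Fin d → ℝ) :
    ∀ z : Fin d → ℝ, (∀ j, l j ≤ z j ∧ z j ≤ u j) →
      (∀ n, 1 ≤ n → ∀ i : Fin k,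
        (ccpIBP d k W l u n).1 i ≤ ccpX d k W n z i ∧
          ccpX d k W n z i ≤ (ccpIBP d k W l u n).2 i) ∧
      (∀ a : Fin o,
        (∑ i, (max (C a i) 0 * (ccpIBP d k W l u N).1 i +
            min (C a i) 0 * (ccpIBP d k W l u N).2 i)) + β a ≤
          (∑ i, C a i * ccpX d k W N z i) + β a ∧
        (∑ i, C a i * ccpX d k W N z i) + β a ≤
          (∑ i, (max (C a i) 0 * (ccpIBP d k W l u N).2 i +
            min (C a i) 0 * (ccpIBP d k W l u N).1 i)) + β a) := by
  intro z hz
  have hx : ∀ n, 1 ≤ n → ∀ i : Fin k,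
      (ccpIBP d k W l u n).1 i ≤ ccpX d k W n z i ∧
        ccpX d k W n z i ≤ (ccpIBP d k W l u n).2 i := by
    intro n hn i
    obtain ⟨m, rfl⟩ := Nat.exists_eq_add_of_le' hn
    exact ccpX_bounds d k W l u z hz m i
  refine ⟨hx, fun a => ?_⟩
  have h := linear_form_bounds (C a) _ _ _ (hx N hN)
  exact ⟨by linarith [h.1], by linarith [h.2]⟩
end

section
/- Let f be an N-degree CCP polynomial network as above, and for a box [l, u] let L^{(N)}(l,u), U^{(N)}(l,u) be the interval-bound-propagation bounds on x^{(N)} defined by the recursion aₙ = (Wₙᵀ)⁺l + (Wₙᵀ)⁻u, bₙ = (Wₙᵀ)⁺u + (Wₙᵀ)⁻l, L^{(1)} = a₁, U^{(1)} = b₁, and L^{(n)}_i = min Sᵢ, U^{(n)}_i = max Sᵢ with Sᵢ = { ((aₙ)ᵢ+1)L^{(n-1)}_i, ((aₙ)ᵢ+1)U^{(n-1)}_i, ((bₙ)ᵢ+1)L^{(n-1)}_i, ((bₙ)ᵢ+1)U^{(n-1)}_i }. If (l^{(q)}, u^{(q)}) is a sequence of boxes with l^{(q)} ≤ u^{(q)}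 entrywise and l^{(q)} → z* and u^{(q)} → z* for some z* ∈ ℝ^d, then L^{(N)}(l^{(q)}, u^{(q)}) → x^{(N)}(z*) and U^{(N)}(l^{(q)}, u^{(q)}) → x^{(N)}(z*). Consequently, for the verification objective g(z) = f(z)_t − f(z)_γ, the IBP lower bound lb^{(q)}(g) = (C⁺L^{(N)} + C⁻U^{(N)} + β)_t − (C⁺U^{(N)} + C⁻L^{(N)} + β)_γ evaluated on the q-th box converges to g(z*); i.e., the gap between g evaluated at any points of the shrinking boxes and the IBP lower bound converges to 0. -/
/-!
The IBP bounds are continuous functions of the box endpoints: they are built from sums, products,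
`min` and `max`. On the degenerate box `[z, z]` they are exact, because `w⁺ x + w⁻ x = w x` makes
`aₙ = bₙ = Wₙᵀ z`, and then all four candidate products coincide with `x^{(n)}(z)`. Hence both
bounds converge to `x^{(N)}(z*)` (`tendsto_ccpIBP`, by induction on the degree), and the same
identity for the rows of `C` (`tendsto_posPart_negPart_sum`) gives convergence of the lower bound
of `g`. Points chosen in the boxes converge to `z*` by squeezing, so `g` at these points has the
same limit by continuity of `x^{(N)}`, and the gap vanishes.
-/

open Filter

/-- An interval affine bound `w⁺ · a + w⁻ · b` is exact in the limit: if the vectors `a q` and `b q`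
both tend to `z`, it tends to `w · z`. -/
lemma tendsto_posPart_negPart_sum {m : ℕ} (w : Fin m → ℝ) {a b : ℕ → Fin m → ℝ} {z : Fin m → ℝ}
    (ha : Tendsto a atTop (nhds z)) (hb : Tendsto b atTop (nhds z)) :
    Tendsto (fun q => ∑ j, (max (w j) 0 * a q j + min (w j) 0 * b q j)) atTop
      (nhds (∑ j, w j * z j)) := by
  rw [tendsto_pi_nhds] at ha hb
  refine tendsto_finsetSum _ fun j _ => ?_
  have hw : w j * z j = max (w j) 0 * z j + min (w j) 0 * z j := by
    rw [← add_mul, max_add_min, add_zero]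
  rw [hw]
  exact ((ha j).const_mul _).add ((hb j).const_mul _)

lemma tendsto_ccpIBP (d k : ℕ) (W : ℕ → Matrix (Fin d) (Fin k) ℝ)
    {l u : ℕ → Fin d → ℝ} {z : Fin d → ℝ}
    (hl : Tendsto l atTop (nhds z)) (hu : Tendsto u atTop (nhds z)) (n : ℕ) :
    Tendsto (fun q => (ccpIBP d k W (l q) (u q) (n + 1)).1) atTop
        (nhds (ccpX d k W (n + 1) z)) ∧
      Tendsto (fun q => (ccpIBP d k W (l q) (u q) (n + 1)).2) atTop
        (nhds (ccpX d k W (n + 1) z)) := by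
  induction n with
  | zero =>
    simp only [tendsto_pi_nhds, ccpIBP, ccpX]
    exact ⟨fun i => tendsto_posPart_negPart_sum (fun j => W 1 j i) hl hu,
      fun i => tendsto_posPart_negPart_sum (fun j => W 1 j i) hu hl⟩
  | succ n ih =>
    simp only [tendsto_pi_nhds] at ih
    simp only [tendsto_pi_nhds, ccpIBP, ccpX]
    have ha (i : Fin k) :=
      (tendsto_posPart_negPart_sum (fun j => W (n + 2) j i) hl hu).add_const 1
    have hb (i : Fin k) :=
      (tendsto_posPart_negPart_sum (fun j => W (n + 2) j i) hu hl).add_const 1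
    -- All four products have the same limit, so `min` and `max` of them do as well.
    constructor
    · intro i
      simpa only [min_self] using
        (((ha i).mul (ih.1 i)).min ((ha i).mul (ih.2 i))).min
          (((hb i).mul (ih.1 i)).min ((hb i).mul (ih.2 i)))
    · intro i
      simpa only [max_self] using
        (((ha i).mul (ih.1 i)).max ((ha i).mul (ih.2 i))).max
          (((hb i).mul (ih.1 i)).max ((hb i).mul (ih.2 i)))

lemma continuous_ccpX (d k : ℕ) (W : ℕ → Matrix (Fin d) (Fin k) ℝ) (n : ℕ) :
    Continuous (ccpX d k W (n + 1)) := by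
  induction n with
  | zero =>
    refine continuous_pi fun i => ?_
    simp only [ccpX]
    fun_prop
  | succ n ih =>
    refine continuous_pi fun i => ?_
    simp only [ccpX]
    fun_prop

/-- consistency of the IBP bounds for a CCP network: if boxes
`[l^{(q)}, u^{(q)}]` (with `l^{(q)} ≤ u^{(q)}` entrywise) have both endpoint sequences
converging to a point `z*`, then the IBP bounds `L^{(N)}, U^{(N)}` on `x^{(N)}` computed on
the `q`-th box both converge to `x^{(N)}(z*)`, the IBP lower bound
`lb^{(q)}(g) = (C⁺L^{(N)} + C⁻U^{(N)} + β)_t − (C⁺U^{(N)} + C⁻L^{(N)} + β)_γ` of the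
verification objective `g(z) = f(z)_t − f(z)_γ` converges to `g(z*)`, and the gap between
`g` evaluated at any points of the shrinking boxes and the IBP lower bound converges
to `0`. -/
theorem ccp_ibp_consistent (d k o N : ℕ) (hN : 1 ≤ N)
    (W : ℕ → Matrix (Fin d) (Fin k) ℝ) (C : Matrix (Fin o) (Fin k) ℝ) (β : Fin o → ℝ)
    (t γ : Fin o)
    (l u : ℕ → Fin d → ℝ) (zstar : Fin d → ℝ)
    (hlu : ∀ q j, l q j ≤ u q j)
    (hl : Tendsto l atTop (nhds zstar)) (hu : Tendsto u atTop (nhds zstar)) :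
    Tendsto (fun q => (ccpIBP d k W (l q) (u q) N).1) atTop
        (nhds (ccpX d k W N zstar)) ∧
    Tendsto (fun q => (ccpIBP d k W (l q) (u q) N).2) atTop
        (nhds (ccpX d k W N zstar)) ∧
    Tendsto (fun q =>
        ((∑ i, (max (C t i) 0 * (ccpIBP d k W (l q) (u q) N).1 i +
            min (C t i) 0 * (ccpIBP d k W (l q) (u q) N).2 i)) + β t) -
          ((∑ i, (max (C γ i) 0 * (ccpIBP d k W (l q) (u q) N).2 i +
            min (C γ i) 0 * (ccpIBP d k W (l q) (u q) N).1 i)) + β γ))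
      atTop
      (nhds (((∑ i, C t i * ccpX d k W N zstar i) + β t) -
        ((∑ i, C γ i * ccpX d k W N zstar i) + β γ))) ∧
    ∀ zq : ℕ → Fin d → ℝ, (∀ q j, l q j ≤ zq q j ∧ zq q j ≤ u q j) →
      Tendsto (fun q =>
          ((((∑ i, C t i * ccpX d k W N (zq q) i) + β t) -
            ((∑ i, C γ i * ccpX d k W N (zq q) i) + β γ)) -
            (((∑ i, (max (C t i) 0 * (ccpIBP d k W (l q) (u q) N).1 i +
                min (C t i) 0 * (ccpIBP d k W (l q) (u q) N).2 i)) + β t) -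
              ((∑ i, (max (C γ i) 0 * (ccpIBP d k W (l q) (u q) N).2 i +
                min (C γ i) 0 * (ccpIBP d k W (l q) (u q) N).1 i)) + β γ))))
        atTop (nhds 0) := by
  obtain ⟨n, rfl⟩ : ∃ n, N = n + 1 := ⟨N - 1, by omega⟩
  obtain ⟨hL, hU⟩ := tendsto_ccpIBP d k W hl hu n
  have hlb := ((tendsto_posPart_negPart_sum (C t) hL hU).add_const (β t)).sub
    ((tendsto_posPart_negPart_sum (C γ) hU hL).add_const (β γ))
  refine ⟨hL, hU, hlb, fun zq hz => ?_⟩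
  have hzq : Tendsto zq atTop (nhds zstar) := by
    rw [tendsto_pi_nhds] at hl hu ⊢
    exact fun j => tendsto_of_tendsto_of_tendsto_of_le_of_le (hl j) (hu j)
      (fun q => (hz q j).1) (fun q => (hz q j).2)
  have hX := continuous_ccpX d k W n
  have hg : Continuous fun z : Fin d → ℝ =>
      ((∑ i, C t i * ccpX d k W (n + 1) z i) + β t) -
        ((∑ i, C γ i * ccpX d k W (n + 1) z i) + β γ) := by
    fun_prop
  simpa only [sub_self, Function.comp_def] using ((hg.tendsto zstar).comp hzq).sub hlb
end

section
/- Let g : ℝ^d → ℝ be continuous and α ≥ 0. Let (l^{(q)}, u^{(q)}) be boxes with l^{(q)} ≤ u^{(q)} entrywise such that l^{(q)} → z* and u^{(q)} → z* for some z* ∈ ℝ^d, and let z_up^{(q)}, z_opt^{(q)} ∈ [l^{(q)}, u^{(q)}] be arbitrary points of the q-th box. Then the gap between the upper bound g(z_up^{(q)}) and the α-convexified lower bound g(z_opt^{(q)}) + α·Σ_{i=1}^d (z_opt,i^{(q)} − l_i^{(q)})(z_opt,i^{(q)} − u_i^{(q)}) converges to 0 as q → ∞. -/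
open Filter

/-- consistency of α-convexification bounds on shrinking boxes.  If `g` is
continuous, `α ≥ 0`, the boxes `[l^{(q)}, u^{(q)}]` shrink to a point `z*` (both endpoint
sequences converge to `z*`), and `z_up^{(q)}, z_opt^{(q)}` are arbitrary points of the `q`-th
box, then the gap between the upper bound `g(z_up^{(q)})` and the α-convexified lower bound
`g(z_opt^{(q)}) + α·Σᵢ (z_opt^{(q)}ᵢ − l^{(q)}ᵢ)(z_opt^{(q)}ᵢ − u^{(q)}ᵢ)` tends to `0`. -/
theorem alpha_convexification_consistent (d : ℕ) (g : (Fin d → ℝ) → ℝ)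
    (hg : Continuous g) (α : ℝ) (hα : 0 ≤ α)
    (l u : ℕ → Fin d → ℝ) (zstar : Fin d → ℝ)
    (hlu : ∀ q i, l q i ≤ u q i)
    (hl : Tendsto l atTop (nhds zstar)) (hu : Tendsto u atTop (nhds zstar))
    (zup zopt : ℕ → Fin d → ℝ)
    (hzup : ∀ q i, l q i ≤ zup q i ∧ zup q i ≤ u q i)
    (hzopt : ∀ q i, l q i ≤ zopt q i ∧ zopt q i ≤ u q i) :
    Tendsto (fun q =>
        g (zup q) - (g (zopt q) + α * ∑ i, (zopt q i - l q i) * (zopt q i - u q i)))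
      atTop (nhds 0) := by
  -- Any choice of points in the boxes is squeezed to `zstar` coordinatewise, so each factor of
  -- the quadratic term vanishes in the limit and the two values of `g` share the limit `g zstar`.
  have squeeze : ∀ z : ℕ → Fin d → ℝ, (∀ q i, l q i ≤ z q i ∧ z q i ≤ u q i) →
      Tendsto z atTop (nhds zstar) := fun z hz =>
    tendsto_pi_nhds.2 fun i =>
      tendsto_of_tendsto_of_tendsto_of_le_of_le (hl.apply_nhds i) (hu.apply_nhds i)
        (fun q => (hz q i).1) (fun q => (hz q i).2)
  have hup := squeeze zup hzup
  have hopt := squeeze zopt hzopt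
  have hsum : Tendsto (fun q => ∑ i, (zopt q i - l q i) * (zopt q i - u q i)) atTop
      (nhds (∑ i, (zstar i - zstar i) * (zstar i - zstar i))) :=
    tendsto_finsetSum _ fun i _ =>
      ((hopt.apply_nhds i).sub (hl.apply_nhds i)).mul
        ((hopt.apply_nhds i).sub (hu.apply_nhds i))
  have key := ((hg.tendsto zstar).comp hup).sub
    (((hg.tendsto zstar).comp hopt).add (hsum.const_mul α))
  simpa using key
end

section
/- Let lJ, uJ ∈ ℝ^{m×d} with lJ ≤ uJ entrywise, and define Ĵ ∈ ℝ^{m×d} by Ĵᵢⱼ = max{|（lJ)ᵢⱼ|, |(uJ)ᵢⱼ|}. Then for every J ∈ ℝ^{m×d} with lJ ≤ J ≤ uJ entrywise, the spectral radius satisfies ρ(J Jᵀ) ≤ ρ(Ĵ Ĵᵀ); that is, Ĵ attains the maximum of ρ(J Jᵀ) over the interval matrix [lJ, uJ]. -/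
/-!
Every `J` in the interval satisfies `|J| ≤ Ĵ` entrywise, hence `|J Jᵀ| ≤ Ĵ Ĵᵀ` entrywise by the
triangle inequality. Entrywise domination `|A| ≤ B` gives `|xᵀ A x| ≤ |x|ᵀ B |x|`, and `|x|` is a
unit vector whenever `x` is, so `specRad A ≤ specRad B` (`specRad_le_of_abs_le`).
-/

open Matrix

/-- `|xᵀ M x|` over unit vectors is bounded by the sum of the `|M i j|`, so the supremum defining
`specRad` is a genuine one (not a junk value). -/
lemma specRad_bddAbove {n : ℕ} (M : Matrix (Fin n) (Fin n) ℝ) :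
    BddAbove {r | ∃ x : Fin n → ℝ,
      (∑ i, (x i) ^ 2) = 1 ∧ r = |∑ i, ∑ j, x i * M i j * x j|} := by
  refine ⟨∑ i, ∑ j, |M i j|, ?_⟩
  rintro r ⟨x, hx, rfl⟩
  have hx1 : ∀ i, |x i| ≤ 1 := fun i => by
    have h : (x i) ^ 2 ≤ ∑ i, (x i) ^ 2 :=
      Finset.single_le_sum (f := fun i => (x i) ^ 2) (fun k _ => sq_nonneg (x k))
        (Finset.mem_univ i)
    rw [hx] at h
    exact (sq_le_one_iff_abs_le_one _).1 h
  refine (Finset.abs_sum_le_sum_abs _ _).trans (Finset.sum_le_sum fun i _ => ?_)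
  refine (Finset.abs_sum_le_sum_abs _ _).trans (Finset.sum_le_sum fun j _ => ?_)
  rw [abs_mul, abs_mul]
  calc |x i| * |M i j| * |x j| ≤ 1 * |M i j| * 1 := by
        gcongr
        · exact hx1 i
        · exact hx1 j
    _ = |M i j| := by ring

/-- Monotonicity of `specRad` under entrywise domination: the value at `x` for `A` is at most the
value at `|x|` for `B`. -/
lemma specRad_le_of_abs_le {n : ℕ} (A B : Matrix (Fin n) (Fin n) ℝ)
    (h : ∀ i j, |A i j| ≤ B i j) : specRad A ≤ specRad B := by
  have h0 : 0 ≤ specRad B := by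
    apply Real.sSup_nonneg
    rintro r ⟨x, -, rfl⟩
    exact abs_nonneg _
  -- `Real.sSup_le` also covers `n = 0`, where there are no unit vectors and both suprema are `0`.
  refine Real.sSup_le ?_ h0
  rintro r ⟨x, hx, rfl⟩
  refine le_trans ?_ (le_csSup (specRad_bddAbove B) ⟨fun i => |x i|, by simpa using hx, rfl⟩)
  refine le_trans ?_ (le_abs_self _)
  refine (Finset.abs_sum_le_sum_abs _ _).trans (Finset.sum_le_sum fun i _ => ?_)
  refine (Finset.abs_sum_le_sum_abs _ _).trans (Finset.sum_le_sum fun j _ => ?_)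
  rw [abs_mul, abs_mul]
  gcongr
  exact h i j

/-- for an interval matrix `[lJ, uJ]` (entrywise `lJ ≤ uJ`) and the entrywise
max-norm matrix `Ĵᵢⱼ = max {|lJᵢⱼ|, |uJᵢⱼ|}`, every `J` with `lJ ≤ J ≤ uJ` entrywise satisfies
`ρ(J Jᵀ) ≤ ρ(Ĵ Ĵᵀ)`; i.e. `Ĵ` attains the maximum of `ρ(J Jᵀ)` over the interval matrix. -/
theorem specRad_JJT_le_maxnorm (m d : ℕ) (lJ uJ : Matrix (Fin m) (Fin d) ℝ)
    (hJ : ∀ i j, lJ i j ≤ uJ i j) :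
    ∀ J : Matrix (Fin m) (Fin d) ℝ,
      (∀ i j, lJ i j ≤ J i j ∧ J i j ≤ uJ i j) →
      specRad (J * Jᵀ) ≤
        specRad ((Matrix.of fun i j => max |lJ i j| |uJ i j|) *
          (Matrix.of fun i j => max |lJ i j| |uJ i j|)ᵀ) := by
  intro J h
  have hle : ∀ i j, |J i j| ≤ max |lJ i j| |uJ i j| := fun i j =>
    abs_le_max_abs_abs (h i j).1 (h i j).2
  refine specRad_le_of_abs_le _ _ fun i j => ?_
  simp only [Matrix.mul_apply, Matrix.transpose_apply, Matrix.of_apply]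
  refine (Finset.abs_sum_le_sum_abs _ _).trans (Finset.sum_le_sum fun k _ => ?_)
  rw [abs_mul]
  exact mul_le_mul (hle i k) (hle j k) (abs_nonneg _) ((abs_nonneg _).trans (hle i k))
end
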